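/- Let φ be a CNF formula with variables x_1,…,x_n and nonempty clauses c_1,…,c_m. Let G=(V,A,4) be the temporal graph with V={x_1,…,x_n}∪{c_1,…,c_m}∪{r} and A consisting of: the arcs (r,x_i,1,2) and (r,x_i,2,3) for every i∈[n]; the arc (x_i,c_j,2,3) for every clause c_j and variable x_i occurring positively in c_j; and the arc (x_i,c_j,3,4) for every clause c_j and variable x_i occurring negatively in c_j. Then, for each d∈{FT,MW}, G has a spanning d-TOB with root r if and only if φ is satisfiable. (Note that every temporal arc of G has elapsed time 1.) -/

import Mathlib

open scoped Classical

universe u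

/-- A temporal arc `(u, v, s, t)`: tail `u`, head `v`, starting time `s`, arrival time `t`. -/
abbrev TArc (α : Type u) := α × α × ℕ × ℕ

/-- The tail vertex of a temporal arc. -/
def TArc.tail {α : Type u} (a : TArc α) : α := a.1

/-- The head vertex of a temporal arc. -/
def TArc.head {α : Type u} (a : TArc α) : α := a.2.1

/-- The starting time of a temporal arc. -/
def TArc.ts {α : Type u} (a : TArc α) : ℕ := a.2.2.1

/-- The arrival time of a temporal arc. -/
def TArc.ta {α : Type u} (a : TArc α) : ℕ := a.2.2.2

/-- The elapsed time of a temporal arc. -/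
def TArc.el {α : Type u} (a : TArc α) : ℕ := TArc.ta a - TArc.ts a

/-- A temporal graph `(V, A, τ)`. -/
structure TempGraph (α : Type u) where
  V : Finset α
  A : Finset (TArc α)
  τ : ℕ
  nonempty : V.Nonempty
  valid : ∀ a ∈ A, TArc.tail a ∈ V ∧ TArc.head a ∈ V ∧ TArc.tail a ≠ TArc.head a ∧
      1 ≤ TArc.ts a ∧ TArc.ts a ≤ TArc.ta a ∧ TArc.ta a ≤ τ

variable {α : Type u}

/-- `IsWalk S u v L` : `L` is the list of arcs of a temporal `(u,v)`-walk using arcs from `S`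
(the trivial walk, `L = []`, requires `u = v`). -/
def IsWalk (S : Finset (TArc α)) : α → α → List (TArc α) → Prop
  | u, v, [] => u = v
  | u, v, a :: L => a ∈ S ∧ TArc.tail a = u ∧ (∀ b ∈ L.head?, TArc.ta a ≤ TArc.ts b) ∧
      IsWalk S (TArc.head a) v L

/-- The starting time of a walk (`0` for the trivial walk). -/
def tsW (L : List (TArc α)) : ℕ := (L.map TArc.ts).headI

/-- The arrival time of a walk (`0` for the trivial walk). -/
def taW (L : List (TArc α)) : ℕ := (L.map TArc.ta).getLastD 0

/-- The duration of a walk. -/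
def durW (L : List (TArc α)) : ℕ := taW L - tsW L

/-- The travelling time of a walk. -/
def ttW (L : List (TArc α)) : ℕ := (L.map TArc.el).sum

/-- The waiting time of a walk. -/
def waitW (L : List (TArc α)) : ℕ :=
  (List.zipWith (fun a b => TArc.ts b - TArc.ta a) L L.tail).sum

/-- The final vertex of a walk starting at `u` with arc list `L`. -/
def endv (u : α) (L : List (TArc α)) : α := (L.map TArc.head).getLastD u

/-- The sequence of vertices of a walk starting at `u` with arc list `L`. -/
def verts (u : α) (L : List (TArc α)) : List α := u :: L.map TArc.head

/-- A walk is a (temporal) path when its vertices are pairwise distinct. -/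
def IsPathList (u : α) (L : List (TArc α)) : Prop := (verts u L).Nodup

/-- The six optimisation criteria: earliest arrival, fastest time, latest departure,
minimum transfers, minimum waiting time, shortest travelling time. -/
inductive DistKind : Type
  | EA | FT | LD | MT | MW | ST
  deriving DecidableEq

/-- The value of a walk for each criterion. -/
def wval : DistKind → List (TArc α) → ℕ
  | .EA, L => taW L
  | .FT, L => durW L
  | .LD, L => tsW L
  | .MT, L => L.length
  | .MW, L => waitW L
  | .ST, L => ttW L

/-- `Realizes d S u v L` : `L` is a temporal `(u,v)`-walk within `S` attaining the optimum
(minimum, or maximum for `LD`) of the criterion `d` among all temporal `(u,v)`-walks in `S`. -/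
def Realizes (d : DistKind) (S : Finset (TArc α)) (u v : α) (L : List (TArc α)) : Prop :=
  IsWalk S u v L ∧ ∀ L', IsWalk S u v L' →
    if d = DistKind.LD then wval d L' ≤ wval d L else wval d L ≤ wval d L'

/-- The distance value `d_G(u,v) ∈ ℕ∞` (`+∞` when `v` is not temporally reachable from `u`;
`LD_G(u,u) = τ + 1`). -/
noncomputable def distVal (d : DistKind) (G : TempGraph α) (u v : α) : ℕ∞ :=
  if d = DistKind.LD then
    (if u = v then ((G.τ : ℕ∞) + 1)
     else if ∃ L, IsWalk G.A u v L then
       sSup {n : ℕ∞ | ∃ L, IsWalk G.A u v L ∧ n = (tsW L : ℕ∞)}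
     else ⊤)
  else sInf {n : ℕ∞ | ∃ L, IsWalk G.A u v L ∧ n = (wval d L : ℕ∞)}

/-- Every vertex of `Vs` is temporally reachable from `r` using arcs from `S`. -/
def ReachAll (S : Finset (TArc α)) (Vs : Finset α) (r : α) : Prop :=
  ∀ v ∈ Vs, ∃ L, IsWalk S r v L

/-- `B` is a temporal out-branching (TOB) with root `r`: its arc set is a minimal set of
temporal arcs such that every vertex of `B` is temporally reachable from `r`. -/
def IsTOB (B : TempGraph α) (r : α) : Prop :=
  r ∈ B.V ∧ ReachAll B.A B.V r ∧ ∀ S ⊂ B.A, ¬ ReachAll S B.V r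

/-- `B` is a temporal subgraph of `G`. -/
def IsSubgraph (B G : TempGraph α) : Prop :=
  B.V ⊆ G.V ∧ B.A ⊆ G.A ∧ B.τ ≤ G.τ

/-- `B` is a `d`-TOB of `G` rooted at `r`. -/
def IsDTOB (d : DistKind) (G B : TempGraph α) (r : α) : Prop :=
  IsTOB B r ∧ IsSubgraph B G ∧ ∀ v ∈ B.V, distVal d B r v = distVal d G r v

/-- `B` is a spanning `d`-TOB of `G` rooted at `r`. -/
def IsSpanningDTOB (d : DistKind) (G B : TempGraph α) (r : α) : Prop :=
  IsDTOB d G B r ∧ B.V = G.V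

/-- `B` is a maximum `d`-TOB of `G` rooted at `r`. -/
def IsMaxDTOB (d : DistKind) (G B : TempGraph α) (r : α) : Prop :=
  IsDTOB d G B r ∧ ∀ B', IsDTOB d G B' r → B'.V.card ≤ B.V.card

/-- The in-degree of `v` with respect to the arc set `S`. -/
noncomputable def inDeg (S : Finset (TArc α)) (v : α) : ℕ :=
  (S.filter fun a => TArc.head a = v).card

/-- A walk in a (static) digraph with arc set `E`. -/
def IsDWalk (E : Finset (α × α)) : α → α → List (α × α) → Prop
  | u, v, [] => u = v
  | u, v, e :: L => e ∈ E ∧ e.1 = u ∧ IsDWalk E e.2 v L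

/-- The digraph `(Vs, E)` is an out-branching with root `r`: every `v ∈ Vs` is the end of
a unique `(r,v)`-walk. -/
def IsOutBranching (Vs : Finset α) (E : Finset (α × α)) (r : α) : Prop :=
  ∀ v ∈ Vs, ∃! L, IsDWalk E r v L

/-- The arc of the underlying multidigraph corresponding to a temporal arc. -/
def proj (a : TArc α) : α × α := (TArc.tail a, TArc.head a)

/-- The temporal subgraph of `G` induced by a set of vertices `Z`. -/
noncomputable def induced (G : TempGraph α) (Z : Finset α) (hne : Z.Nonempty) (hZ : Z ⊆ G.V) :
    TempGraph α where
  V := Z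
  A := G.A.filter fun a => TArc.tail a ∈ Z ∧ TArc.head a ∈ Z
  τ := G.τ
  nonempty := hne
  valid := by
    intro a ha
    simp only [Finset.mem_filter] at ha
    obtain ⟨haA, h1, h2⟩ := ha
    obtain ⟨-, -, h3, h4, h5, h6⟩ := G.valid a haA
    exact ⟨h1, h2, h3, h4, h5, h6⟩

/-- The reverse of a temporal arc with respect to lifetime `τ`. -/
def TArc.rev (τ : ℕ) (a : TArc α) : TArc α :=
  (TArc.head a, TArc.tail a, τ + 1 - TArc.ta a, τ + 1 - TArc.ts a)

/-- The reverse of a temporal graph. -/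
noncomputable def TempGraph.rev (G : TempGraph α) : TempGraph α where
  V := G.V
  A := G.A.image (TArc.rev G.τ)
  τ := G.τ
  nonempty := G.nonempty
  valid := by
    intro b hb
    simp only [Finset.mem_image] at hb
    obtain ⟨a, ha, rfl⟩ := hb
    obtain ⟨h1, h2, h3, h4, h5, h6⟩ := G.valid a ha
    refine ⟨h2, h1, Ne.symm h3, ?_, ?_, ?_⟩ <;>
      simp only [TArc.rev, TArc.tail, TArc.head, TArc.ts, TArc.ta] at * <;> omega

/-- The reverse of a temporal walk. -/
def revWalk (τ : ℕ) (L : List (TArc α)) : List (TArc α) := (L.map (TArc.rev τ)).reverse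

/-- Every vertex of `Vs` temporally reaches `r` using arcs from `S`. -/
def CoReachAll (S : Finset (TArc α)) (Vs : Finset α) (r : α) : Prop :=
  ∀ v ∈ Vs, ∃ L, IsWalk S v r L

/-- `B` is a temporal in-branching (TIB) with root `r`. -/
def IsTIB (B : TempGraph α) (r : α) : Prop :=
  r ∈ B.V ∧ CoReachAll B.A B.V r ∧ ∀ S ⊂ B.A, ¬ CoReachAll S B.V r

/-- `B` is a `d`-TIB of `G` rooted at `r`. -/
def IsDTIB (d : DistKind) (G B : TempGraph α) (r : α) : Prop :=
  IsTIB B r ∧ IsSubgraph B G ∧ ∀ v ∈ B.V, distVal d B v r = distVal d G v r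

/-- `B` is a maximum `d`-TIB of `G` rooted at `r`. -/
def IsMaxDTIB (d : DistKind) (G B : TempGraph α) (r : α) : Prop :=
  IsDTIB d G B r ∧ ∀ B', IsDTIB d G B' r → B'.V.card ≤ B.V.card

/-- The reverse of a temporal subgraph, with respect to the ambient lifetime `τ`. -/
noncomputable def revSub (τ : ℕ) (B : TempGraph α) (h : B.τ ≤ τ) : TempGraph α where
  V := B.V
  A := B.A.image (TArc.rev τ)
  τ := τ
  nonempty := B.nonempty
  valid := by
    intro b hb
    simp only [Finset.mem_image] at hb
    obtain ⟨a, ha, rfl⟩ := hb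
    obtain ⟨h1, h2, h3, h4, h5, h6⟩ := B.valid a ha
    refine ⟨h2, h1, Ne.symm h3, ?_, ?_, ?_⟩ <;>
      simp only [TArc.rev, TArc.tail, TArc.head, TArc.ts, TArc.ta] at * <;> omega

/-- `L` (a walk from `u`) is `d`-prefix-optimal: every prefix of it realizes the distance `d`
from `u` to the end vertex of the prefix. -/
def PrefixOptimal (d : DistKind) (S : Finset (TArc α)) (u : α) (L : List (TArc α)) : Prop :=
  ∀ h ≤ L.length, Realizes d S u (endv u (L.take h)) (L.take h)

/-- `EAd_G(u,v)`: the minimum arrival time among the walks realizing `d_G(u,v)`. -/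
noncomputable def eaVal (d : DistKind) (G : TempGraph α) (u v : α) : ℕ∞ :=
  sInf {n : ℕ∞ | ∃ L, Realizes d G.A u v L ∧ n = (taW L : ℕ∞)}

/-- `G'` is a `d`-temporal out-spanning subgraph (d-TOSS) with root `r` of `G`. -/
def IsDTOSS (d : DistKind) (G G' : TempGraph α) (r : α) : Prop :=
  IsSubgraph G' G ∧ G'.V = G.V ∧
    ∀ v ∈ G.V, ∃ L, IsWalk G'.A r v L ∧ Realizes d G.A r v L

/-- Satisfiability of a CNF formula given by the positive/negative occurrence sets
of its clauses. -/
def Satisfiable (n m : ℕ) (pos neg : Fin m → Finset (Fin n)) : Prop :=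
  ∃ σ : Fin n → Bool, ∀ j : Fin m, (∃ i ∈ pos j, σ i = true) ∨ ∃ i ∈ neg j, σ i = false

/-- Vertex set of the reduction: variables, clauses and the root. -/
abbrev V14 (n m : ℕ) := Sum (Fin n) (Sum (Fin m) Unit)

/-- The root vertex `r`. -/
def rt14 (n m : ℕ) : V14 n m := Sum.inr (Sum.inr ())

/-- The temporal graph of the reduction of Theorem `thm:FT_tob_hard` (elapsed time 1 case):
arcs `(r,x_i,1,2)`, `(r,x_i,2,3)` for every variable, `(x_i,c_j,2,3)` when `x_i` occurs
positively in `c_j` and `(x_i,c_j,3,4)` when `x_i` occurs negatively in `c_j`; every arc has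
elapsed time 1 and the lifetime is 4. -/
noncomputable def G14 (n m : ℕ) (pos neg : Fin m → Finset (Fin n)) :
    TempGraph (V14 n m) where
  V := Finset.univ
  A :=
    (Finset.univ.image fun i : Fin n =>
        ((rt14 n m, Sum.inl i, 1, 2) : TArc (V14 n m)))
    ∪ (Finset.univ.image fun i : Fin n =>
        ((rt14 n m, Sum.inl i, 2, 3) : TArc (V14 n m)))
    ∪ (Finset.univ.biUnion fun j : Fin m =>
        ((pos j).image fun i =>
          ((Sum.inl i, Sum.inr (Sum.inl j), 2, 3) : TArc (V14 n m)))
        ∪ ((neg j).image fun i =>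
          ((Sum.inl i, Sum.inr (Sum.inl j), 3, 4) : TArc (V14 n m))))
  τ := 4
  nonempty := ⟨rt14 n m, Finset.mem_univ _⟩
  valid := by
    intro a ha
    simp only [Finset.mem_union, Finset.mem_image, Finset.mem_biUnion, Finset.mem_univ,
      true_and] at ha
    rcases ha with ((⟨i, rfl⟩ | ⟨i, rfl⟩) | ⟨j, (⟨i, -, rfl⟩ | ⟨i, -, rfl⟩)⟩) <;>
      exact ⟨Finset.mem_univ _, Finset.mem_univ _,
        by simp [TArc.tail, TArc.head, rt14],
        by norm_num [TArc.ts], by norm_num [TArc.ts, TArc.ta], by norm_num [TArc.ta]⟩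

/-!
In a temporal out-branching any two arcs with the same head `v` coincide. Some walk from the root
first enters `v` by an arc `c` whose arrival time is least among the arcs into `v`, and then every
walk using another arc `b` into `v` can be rerouted through `c`, so that `b` could be deleted.

Along a walk, duration is travelling time plus waiting time. In the reduction graph every arc has
elapsed time 1 and all walks from `r` to a given vertex have the same length, so a walk from `r` is
optimal for `FT` or `MW` iff it never waits. A walk to `c_j` through `x_i` never waits iff it
arrives at `x_i` at time 2 and continues along a positive occurrence, or at time 3 and continues
along a negative one. Since a spanning branching picks exactly one arc into each `x_i`, it amounts
to a satisfying assignment.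
-/

theorem TempGraph.ts_le_ta {G : TempGraph α} {a : TArc α} (ha : a ∈ G.A) :
    TArc.ts a ≤ TArc.ta a :=
  (G.valid a ha).2.2.2.2.1

section Walks

variable {S T : Finset (TArc α)} {u v w : α} {L : List (TArc α)}

theorem IsWalk.mem (h : IsWalk S u v L) {a : TArc α} (ha : a ∈ L) : a ∈ S := by
  induction L generalizing u with
  | nil => simp at ha
  | cons e L ih =>
    rcases List.mem_cons.1 ha with rfl | ha
    · exact h.1
    · exact ih h.2.2.2 ha

theorem IsWalk.of_forall_mem (h : IsWalk S u v L) (hL : ∀ a ∈ L, a ∈ T) : IsWalk T u v L := by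
  induction L generalizing u with
  | nil => exact h
  | cons e L ih =>
    obtain ⟨-, htail, htime, hwalk⟩ := h
    exact ⟨hL e List.mem_cons_self, htail, htime,
      ih hwalk fun a ha => hL a (List.mem_cons_of_mem e ha)⟩

theorem IsWalk.mono (hST : S ⊆ T) (h : IsWalk S u v L) : IsWalk T u v L :=
  h.of_forall_mem fun _ ha => hST (h.mem ha)

theorem IsWalk.erase {a : TArc α} (h : IsWalk S u v L) (ha : a ∉ L) :
    IsWalk (S.erase a) u v L :=
  h.of_forall_mem fun _ hb => Finset.mem_erase.2 ⟨ne_of_mem_of_not_mem hb ha, h.mem hb⟩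

theorem isWalk_append_cons {P Q : List (TArc α)} {a : TArc α} :
    IsWalk S u w (P ++ a :: Q) ↔ IsWalk S u (TArc.head a) (P ++ [a]) ∧
      (∀ b ∈ Q.head?, TArc.ta a ≤ TArc.ts b) ∧ IsWalk S (TArc.head a) w Q := by
  induction P generalizing u with
  | nil => simp [IsWalk, and_assoc]
  | cons e P ih => cases P <;> simp_all [IsWalk, and_assoc]

theorem IsWalk.pairwise_ta_le_ts (hS : ∀ a ∈ S, TArc.ts a ≤ TArc.ta a) (h : IsWalk S u v L) :
    L.Pairwise fun a b => TArc.ta a ≤ TArc.ts b := by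
  induction L generalizing u with
  | nil => exact List.Pairwise.nil
  | cons e L ih =>
    obtain ⟨-, -, htime, hwalk⟩ := h
    have hL := ih hwalk
    refine List.pairwise_cons.2 ⟨?_, hL⟩
    cases L with
    | nil => simp
    | cons f L =>
      have hef : TArc.ta e ≤ TArc.ts f := htime f rfl
      intro b hb
      rcases List.mem_cons.1 hb with rfl | hb
      · exact hef
      · exact hef.trans ((hS f hwalk.1).trans (List.rel_of_pairwise_cons hL hb))

theorem IsWalk.exists_first_arrival (hS : ∀ a ∈ S, TArc.ts a ≤ TArc.ta a) (h : IsWalk S u w L)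
    {a : TArc α} (ha : a ∈ L) :
    ∃ P c, TArc.head c = TArc.head a ∧ TArc.ta c ≤ TArc.ta a ∧
      IsWalk S u (TArc.head c) (P ++ [c]) ∧ ∀ e ∈ P, TArc.head e ≠ TArc.head a := by
  obtain ⟨c, hc⟩ : ∃ c, L.find? (fun e => TArc.head e = TArc.head a) = some c :=
    Option.isSome_iff_exists.1 (List.find?_isSome.2 ⟨a, ha, decide_eq_true rfl⟩)
  obtain ⟨hca, P, Q, rfl, hP⟩ := List.find?_eq_some_iff_append.1 hc
  have hPa : ∀ e ∈ P, TArc.head e ≠ TArc.head a := by simpa using hP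
  have hle : TArc.ta c ≤ TArc.ta a := by
    rcases List.mem_append.1 ha with haP | hacQ
    · exact absurd rfl (hPa a haP)
    rcases List.mem_cons.1 hacQ with rfl | haQ
    · exact le_rfl
    have hcQ := (List.pairwise_append.1 (h.pairwise_ta_le_ts hS)).2.1
    exact (List.rel_of_pairwise_cons hcQ haQ).trans (hS a (h.mem ha))
  exact ⟨P, c, of_decide_eq_true hca, hle, (isWalk_append_cons.1 h).1, hPa⟩

theorem IsWalk.taW_eq (hS : ∀ a ∈ S, TArc.ts a ≤ TArc.ta a) (h : IsWalk S u v L) :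
    taW L = tsW L + ttW L + waitW L := by
  induction L generalizing u with
  | nil => rfl
  | cons a L ih =>
    obtain ⟨ha, -, htime, hwalk⟩ := h
    have hale : TArc.ts a ≤ TArc.ta a := hS a ha
    cases L with
    | nil => simp [taW, tsW, ttW, waitW, TArc.el, hale]
    | cons b L =>
      have hab : TArc.ta a ≤ TArc.ts b := htime b rfl
      have hL := ih hwalk
      simp only [taW, tsW, ttW, waitW, TArc.el, List.map_cons, List.headI_cons,
        List.getLastD_cons, List.sum_cons, List.tail_cons, List.zipWith_cons_cons] at hL ⊢
      omega

theorem IsWalk.durW_eq (hS : ∀ a ∈ S, TArc.ts a ≤ TArc.ta a) (h : IsWalk S u v L) :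
    durW L = ttW L + waitW L := by
  rw [durW, h.taW_eq hS, Nat.add_assoc, Nat.add_sub_cancel_left]

end Walks

section Realizes

variable {S : Finset (TArc α)} {u v : α} {L : List (TArc α)} {d : DistKind}

theorem realizes_iff_of_ne_LD (hd : d ≠ DistKind.LD) :
    Realizes d S u v L ↔ IsWalk S u v L ∧ ∀ L', IsWalk S u v L' → wval d L ≤ wval d L' := by
  simp only [Realizes, if_neg hd]

theorem exists_realizes (hd : d ≠ DistKind.LD) (h : ∃ L, IsWalk S u v L) :
    ∃ L, Realizes d S u v L := by
  obtain ⟨L, hL⟩ := exists_minimalFor_of_wellFoundedLT (IsWalk S u v) (wval d) h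
  exact ⟨L, (realizes_iff_of_ne_LD hd).2 ⟨hL.prop, fun L' hL' => hL.le hL'⟩⟩

theorem Realizes.distVal_eq {G : TempGraph α} (hd : d ≠ DistKind.LD)
    (h : Realizes d G.A u v L) : distVal d G u v = wval d L := by
  obtain ⟨hL, hmin⟩ := (realizes_iff_of_ne_LD hd).1 h
  rw [distVal, if_neg hd]
  refine IsLeast.csInf_eq ⟨⟨L, hL, rfl⟩, ?_⟩
  rintro _ ⟨L', hL', rfl⟩
  exact Nat.cast_le.2 (hmin L' hL')

theorem distVal_eq_iff_exists_realizes {B G : TempGraph α} (hd : d ≠ DistKind.LD)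
    (hBG : B.A ⊆ G.A) (hv : ∃ L, IsWalk B.A u v L) :
    distVal d B u v = distVal d G u v ↔ ∃ L, IsWalk B.A u v L ∧ Realizes d G.A u v L := by
  constructor
  · intro heq
    obtain ⟨L, hL⟩ := exists_realizes hd hv
    obtain ⟨M, hM⟩ := exists_realizes hd (hv.imp fun _ => IsWalk.mono hBG)
    have hLM : wval d L = wval d M := by
      exact_mod_cast (hL.distVal_eq hd).symm.trans (heq.trans (hM.distVal_eq hd))
    refine ⟨L, hL.1, (realizes_iff_of_ne_LD hd).2 ⟨hL.1.mono hBG, fun L' hL' => ?_⟩⟩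
    exact hLM.trans_le (((realizes_iff_of_ne_LD hd).1 hM).2 L' hL')
  · rintro ⟨L, hLB, hLG⟩
    have hmin := ((realizes_iff_of_ne_LD hd).1 hLG).2
    have hL : Realizes d B.A u v L :=
      (realizes_iff_of_ne_LD hd).2 ⟨hLB, fun L' hL' => hmin L' (hL'.mono hBG)⟩
    rw [hL.distVal_eq hd, hLG.distVal_eq hd]

theorem realizes_MW_iff_waitW_eq_zero
    (h : (∃ L, IsWalk S u v L) → ∃ L, IsWalk S u v L ∧ waitW L = 0) :
    Realizes DistKind.MW S u v L ↔ IsWalk S u v L ∧ waitW L = 0 := by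
  refine (realizes_iff_of_ne_LD (by simp)).trans (and_congr_right fun hL => ⟨fun hmin => ?_, ?_⟩)
  · obtain ⟨L₀, hL₀, hwait⟩ := h ⟨L, hL⟩
    exact Nat.eq_zero_of_le_zero (hwait ▸ hmin L₀ hL₀)
  · exact fun hwait L' _ => hwait.trans_le (Nat.zero_le _)

theorem realizes_FT_iff_realizes_MW (hS : ∀ a ∈ S, TArc.ts a ≤ TArc.ta a)
    (htt : ∀ L₁ L₂, IsWalk S u v L₁ → IsWalk S u v L₂ → ttW L₁ = ttW L₂) :
    Realizes DistKind.FT S u v L ↔ Realizes DistKind.MW S u v L := by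
  rw [realizes_iff_of_ne_LD (by simp), realizes_iff_of_ne_LD (by simp)]
  refine and_congr_right fun hL => forall₂_congr fun L' hL' => ?_
  simp only [wval, hL.durW_eq hS, hL'.durW_eq hS, htt L L' hL hL', Nat.add_le_add_iff_left]

end Realizes

section OutBranchings

variable {S : Finset (TArc α)} {Vs : Finset α} {r : α}

-- A walk using `b` is rerouted by replacing everything up to its last use of `b`.
theorem ReachAll.erase (h : ReachAll S Vs r) {b c : TArc α} {P : List (TArc α)}
    (hP : IsWalk (S.erase b) r (TArc.head c) (P ++ [c])) (hhead : TArc.head c = TArc.head b)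
    (hta : TArc.ta c ≤ TArc.ta b) : ReachAll (S.erase b) Vs r := by
  intro v hv
  obtain ⟨L, hL⟩ := h v hv
  by_cases hb : b ∈ L
  · obtain ⟨X, Y, rfl, hbY⟩ : ∃ X Y, L = X ++ b :: Y ∧ b ∉ Y := by
      obtain ⟨Y, X, hYX, hbY⟩ := List.eq_append_cons_of_mem (List.mem_reverse.2 hb)
      exact ⟨X.reverse, Y.reverse, by simpa using congrArg List.reverse hYX, by simpa using hbY⟩
    obtain ⟨-, htime, hY⟩ := isWalk_append_cons.1 hL
    exact ⟨P ++ c :: Y, isWalk_append_cons.2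
      ⟨hP, fun e he => hta.trans (htime e he), hhead ▸ hY.erase hbY⟩⟩
  · exact ⟨L, hL.erase hb⟩

theorem IsTOB.exists_isWalk_mem {B : TempGraph α} (hB : IsTOB B r) {a : TArc α} (ha : a ∈ B.A) :
    ∃ v L, IsWalk B.A r v L ∧ a ∈ L := by
  by_contra! hunused
  refine hB.2.2 _ (Finset.erase_ssubset ha) fun v hv => ?_
  obtain ⟨L, hL⟩ := hB.2.1 v hv
  exact ⟨L, hL.erase (hunused v L hL)⟩

theorem IsTOB.injOn_head {B : TempGraph α} (hB : IsTOB B r) :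
    Set.InjOn TArc.head (B.A : Set (TArc α)) := by
  intro a ha a' ha' haa'
  obtain ⟨e, he, hmin⟩ := Finset.exists_min_image
    (B.A.filter fun e => TArc.head e = TArc.head a) TArc.ta ⟨a, Finset.mem_filter.2 ⟨ha, rfl⟩⟩
  obtain ⟨heB, hea⟩ := Finset.mem_filter.1 he
  obtain ⟨w, L, hL, heL⟩ := hB.exists_isWalk_mem heB
  obtain ⟨P, c, hce, hta, hPc, hP⟩ := hL.exists_first_arrival (fun _ => TempGraph.ts_le_ta) heL
  have eq_c : ∀ b ∈ B.A, TArc.head b = TArc.head a → b = c := by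
    intro b hb hba
    by_contra hbc
    have hbP : b ∉ P ++ [c] := by
      simpa [hbc] using fun hb' : b ∈ P => hP b hb' (hba.trans hea.symm)
    exact hB.2.2 _ (Finset.erase_ssubset hb) (hB.2.1.erase (hPc.erase hbP)
      (hce.trans (hea.trans hba.symm)) (hta.trans (hmin b (Finset.mem_filter.2 ⟨hb, hba⟩))))
  exact (eq_c a ha rfl).trans (eq_c a' ha' haa'.symm).symm

theorem IsDTOB.exists_realizes {d : DistKind} {G B : TempGraph α} (hd : d ≠ DistKind.LD)
    (hB : IsDTOB d G B r) {v : α} (hv : v ∈ B.V) :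
    ∃ L, IsWalk B.A r v L ∧ Realizes d G.A r v L :=
  (distVal_eq_iff_exists_realizes hd hB.2.1.2.1 (hB.1.2.1 v hv)).1 (hB.2.2 v hv)

theorem exists_isSpanningDTOB {d : DistKind} {G : TempGraph α} (hd : d ≠ DistKind.LD)
    (hr : r ∈ G.V) (hSG : S ⊆ G.A) (hS : ReachAll S G.V r)
    (hopt : ∀ v L, IsWalk S r v L → Realizes d G.A r v L) :
    ∃ B, IsSpanningDTOB d G B r := by
  obtain ⟨T, hTS, hT⟩ := exists_minimal_le_of_wellFoundedLT (fun T => ReachAll T G.V r) S hS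
  have hTG : T ⊆ G.A := hTS.trans hSG
  let B : TempGraph α := { G with A := T, valid := fun a ha => G.valid a (hTG ha) }
  refine ⟨B, ⟨⟨hr, hT.prop, fun T' hT' => hT.not_prop_of_lt hT'⟩,
    ⟨subset_rfl, hTG, le_rfl⟩, fun v hv => ?_⟩, rfl⟩
  obtain ⟨L, hL⟩ := hT.prop v hv
  exact (distVal_eq_iff_exists_realizes (B := B) hd hTG ⟨L, hL⟩).2
    ⟨L, hL, hopt v L (hL.mono hTS)⟩

end OutBranchings

section Reduction

variable {n m : ℕ} {pos neg : Fin m → Finset (Fin n)}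

/-- The variables whose literal of sign `b` (`true` for `x_i`, `false` for `¬x_i`) occurs in the
clause `c_j`. -/
def litVars (pos neg : Fin m → Finset (Fin n)) (b : Bool) (j : Fin m) : Finset (Fin n) :=
  if b then pos j else neg j

/-- The time at which the arc `(r, x_i, s, s + 1)` encoding the truth value `b` of `x_i` starts. -/
def litTime (b : Bool) : ℕ := if b then 1 else 2

/-- The arc of the reduction graph from `r` to `x_i` that encodes giving `x_i` the value `b`. -/
def varArc (m : ℕ) (i : Fin n) (b : Bool) : TArc (V14 n m) :=
  (rt14 n m, Sum.inl i, litTime b, litTime b + 1)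

/-- The arc of the reduction graph from `x_i` to `c_j` that encodes the occurrence in `c_j` of the
literal of `x_i` of sign `b`. It starts when `varArc m i b` arrives. -/
def clauseArc (i : Fin n) (j : Fin m) (b : Bool) : TArc (V14 n m) :=
  (Sum.inl i, Sum.inr (Sum.inl j), litTime b + 1, litTime b + 2)

theorem litTime_injective : Function.Injective litTime := by
  decide

theorem satisfiable_iff_exists_litVars :
    Satisfiable n m pos neg ↔ ∃ σ : Fin n → Bool, ∀ j, ∃ i, i ∈ litVars pos neg (σ i) j := by
  refine exists_congr fun σ => forall_congr' fun j => ?_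
  rw [← exists_or]
  refine exists_congr fun i => ?_
  cases h : σ i <;> simp [litVars]

theorem mem_G14_A {a : TArc (V14 n m)} :
    a ∈ (G14 n m pos neg).A ↔ (∃ i b, a = varArc m i b) ∨
      ∃ i j b, i ∈ litVars pos neg b j ∧ a = clauseArc i j b := by
  simp only [G14, varArc, clauseArc, litVars, litTime, Finset.mem_union, Finset.mem_image,
    Finset.mem_biUnion, Finset.mem_univ, true_and, Bool.exists_bool]
  grind

theorem varArc_inj {i i' : Fin n} {b b' : Bool} :
    varArc m i b = varArc m i' b' ↔ i = i' ∧ b = b' := by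
  simp [varArc, litTime_injective.eq_iff]

theorem clauseArc_inj {i i' : Fin n} {j j' : Fin m} {b b' : Bool} :
    clauseArc i j b = clauseArc i' j' b' ↔ i = i' ∧ j = j' ∧ b = b' := by
  simp [clauseArc, litTime_injective.eq_iff]

theorem varArc_ne_clauseArc (i i' : Fin n) (j : Fin m) (b b' : Bool) :
    varArc m i b ≠ clauseArc i' j b' := by
  simp [varArc, clauseArc, rt14]

theorem varArc_mem_G14_A (i : Fin n) (b : Bool) : varArc m i b ∈ (G14 n m pos neg).A :=
  mem_G14_A.2 (.inl ⟨i, b, rfl⟩)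

theorem clauseArc_mem_G14_A {i : Fin n} {j : Fin m} {b : Bool} :
    clauseArc i j b ∈ (G14 n m pos neg).A ↔ i ∈ litVars pos neg b j := by
  refine ⟨fun h => ?_, fun h => mem_G14_A.2 (.inr ⟨i, j, b, h, rfl⟩)⟩
  rcases mem_G14_A.1 h with ⟨i', b', heq⟩ | ⟨i', j', b', hi', heq⟩
  · exact absurd heq.symm (varArc_ne_clauseArc i' i j b' b)
  · obtain ⟨rfl, rfl, rfl⟩ := clauseArc_inj.1 heq
    exact hi'

theorem isWalk_varArc {S : Finset (TArc (V14 n m))} {i : Fin n} {b : Bool}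
    (h : varArc m i b ∈ S) : IsWalk S (rt14 n m) (Sum.inl i) [varArc m i b] :=
  ⟨h, rfl, by simp, rfl⟩

theorem isWalk_varArc_clauseArc {S : Finset (TArc (V14 n m))} {i : Fin n} {j : Fin m} {b : Bool}
    (h : varArc m i b ∈ S) (h' : clauseArc i j b ∈ S) :
    IsWalk S (rt14 n m) (Sum.inr (Sum.inl j)) [varArc m i b, clauseArc i j b] :=
  ⟨h, rfl, by simp [varArc, clauseArc, TArc.ta, TArc.ts], h', rfl, by simp, rfl⟩

theorem waitW_varArc (i : Fin n) (b : Bool) : waitW [varArc m i b] = 0 :=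
  rfl

theorem waitW_varArc_clauseArc (i : Fin n) (j : Fin m) (b b' : Bool) :
    waitW [varArc m i b, clauseArc i j b'] = litTime b' - litTime b := by
  simp [waitW, varArc, clauseArc, TArc.ta, TArc.ts]

theorem el_eq_one_of_mem_G14_A {a : TArc (V14 n m)} (ha : a ∈ (G14 n m pos neg).A) :
    TArc.el a = 1 := by
  rcases mem_G14_A.1 ha with ⟨i, b, rfl⟩ | ⟨i, j, b, -, rfl⟩ <;>
    simp [TArc.el, TArc.ta, TArc.ts, varArc, clauseArc]

theorem ttW_eq_length {v w : V14 n m} {L : List (TArc (V14 n m))}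
    (h : IsWalk (G14 n m pos neg).A v w L) : ttW L = L.length := by
  rw [ttW, List.map_congr_left fun a ha => el_eq_one_of_mem_G14_A (h.mem ha)]
  simp

theorem isWalk_G14_clause {j : Fin m} {v : V14 n m} {L : List (TArc (V14 n m))}
    (h : IsWalk (G14 n m pos neg).A (Sum.inr (Sum.inl j)) v L) :
    v = Sum.inr (Sum.inl j) ∧ L = [] := by
  cases L with
  | nil => exact ⟨h.symm, rfl⟩
  | cons a L =>
    obtain ⟨ha, htail, -⟩ := h
    rcases mem_G14_A.1 ha with ⟨i, b, rfl⟩ | ⟨i, j, b, -, rfl⟩ <;>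
      simp [TArc.tail, varArc, clauseArc, rt14] at htail

theorem isWalk_G14_var {i : Fin n} {v : V14 n m} {L : List (TArc (V14 n m))}
    (h : IsWalk (G14 n m pos neg).A (Sum.inl i) v L) :
    (v = Sum.inl i ∧ L = []) ∨ ∃ j b, v = Sum.inr (Sum.inl j) ∧
      i ∈ litVars pos neg b j ∧ L = [clauseArc i j b] := by
  cases L with
  | nil => exact .inl ⟨h.symm, rfl⟩
  | cons a L =>
    obtain ⟨ha, htail, -, hwalk⟩ := h
    rcases mem_G14_A.1 ha with ⟨i', b, rfl⟩ | ⟨i', j, b, hi, rfl⟩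
    · simp [TArc.tail, varArc, rt14] at htail
    · obtain rfl : i' = i := Sum.inl.inj htail
      obtain ⟨rfl, rfl⟩ := isWalk_G14_clause hwalk
      exact .inr ⟨j, b, rfl, hi, rfl⟩

theorem isWalk_G14_root {v : V14 n m} {L : List (TArc (V14 n m))}
    (h : IsWalk (G14 n m pos neg).A (rt14 n m) v L) :
    (v = rt14 n m ∧ L = []) ∨ (∃ i b, v = Sum.inl i ∧ L = [varArc m i b]) ∨
      ∃ i j b b', v = Sum.inr (Sum.inl j) ∧ i ∈ litVars pos neg b' j ∧
        litTime b ≤ litTime b' ∧ L = [varArc m i b, clauseArc i j b'] := by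
  cases L with
  | nil => exact .inl ⟨h.symm, rfl⟩
  | cons a L =>
    obtain ⟨ha, htail, htime, hwalk⟩ := h
    rcases mem_G14_A.1 ha with ⟨i, b, rfl⟩ | ⟨i, j, b, -, rfl⟩
    · rcases isWalk_G14_var hwalk with ⟨rfl, rfl⟩ | ⟨j, b', rfl, hi, rfl⟩
      · exact .inr (.inl ⟨i, b, rfl, rfl⟩)
      · exact .inr (.inr ⟨i, j, b, b', rfl, hi, Nat.le_of_succ_le_succ (htime _ rfl), rfl⟩)
    · simp [TArc.tail, clauseArc, rt14] at htail

theorem length_eq_of_isWalk_G14_root {v : V14 n m} {L : List (TArc (V14 n m))}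
    (h : IsWalk (G14 n m pos neg).A (rt14 n m) v L) :
    L.length = Sum.elim (fun _ => 1) (Sum.elim (fun _ => 2) fun _ => 0) v := by
  rcases isWalk_G14_root h with ⟨rfl, rfl⟩ | ⟨i, b, rfl, rfl⟩ | ⟨i, j, b, b', rfl, -, -, rfl⟩ <;>
    rfl

theorem exists_isWalk_G14_root_waitW_eq_zero {v : V14 n m}
    (h : ∃ L, IsWalk (G14 n m pos neg).A (rt14 n m) v L) :
    ∃ L, IsWalk (G14 n m pos neg).A (rt14 n m) v L ∧ waitW L = 0 := by
  obtain ⟨L, hL⟩ := h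
  rcases isWalk_G14_root hL with ⟨-, rfl⟩ | ⟨i, b, -, rfl⟩ | ⟨i, j, -, b, rfl, hi, -, -⟩
  · exact ⟨_, hL, rfl⟩
  · exact ⟨_, hL, waitW_varArc i b⟩
  · exact ⟨_, isWalk_varArc_clauseArc (varArc_mem_G14_A i b) (clauseArc_mem_G14_A.2 hi),
      (waitW_varArc_clauseArc i j b b).trans (Nat.sub_self _)⟩

theorem realizes_G14_root_iff {d : DistKind} (hd : d = DistKind.FT ∨ d = DistKind.MW)
    {v : V14 n m} {L : List (TArc (V14 n m))} :
    Realizes d (G14 n m pos neg).A (rt14 n m) v L ↔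
      IsWalk (G14 n m pos neg).A (rt14 n m) v L ∧ waitW L = 0 := by
  have hMW := realizes_MW_iff_waitW_eq_zero (L := L)
    (exists_isWalk_G14_root_waitW_eq_zero (pos := pos) (neg := neg) (v := v))
  rcases hd with rfl | rfl
  · refine (realizes_FT_iff_realizes_MW (fun _ => TempGraph.ts_le_ta) fun L₁ L₂ h₁ h₂ => ?_).trans
      hMW
    rw [ttW_eq_length h₁, ttW_eq_length h₂, length_eq_of_isWalk_G14_root h₁,
      length_eq_of_isWalk_G14_root h₂]
  · exact hMW

theorem exists_eq_of_isWalk_G14_of_waitW_eq_zero {j : Fin m} {L : List (TArc (V14 n m))}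
    (h : IsWalk (G14 n m pos neg).A (rt14 n m) (Sum.inr (Sum.inl j)) L) (hwait : waitW L = 0) :
    ∃ i b, i ∈ litVars pos neg b j ∧ L = [varArc m i b, clauseArc i j b] := by
  rcases isWalk_G14_root h with ⟨hv, -⟩ | ⟨i, b, hv, -⟩ | ⟨i, j', b, b', hv, hi, hle, rfl⟩
  · simp [rt14] at hv
  · simp at hv
  · obtain rfl : j = j' := by simpa using hv
    rw [waitW_varArc_clauseArc] at hwait
    obtain rfl : b = b' := litTime_injective (hle.antisymm (Nat.sub_eq_zero_iff_le.1 hwait))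
    exact ⟨i, b, hi, rfl⟩

theorem satisfiable_of_isSpanningDTOB {d : DistKind} (hd : d = DistKind.FT ∨ d = DistKind.MW)
    {B : TempGraph (V14 n m)} (hB : IsSpanningDTOB d (G14 n m pos neg) B (rt14 n m)) :
    Satisfiable n m pos neg := by
  obtain ⟨hDTOB, hV⟩ := hB
  have hBG : B.A ⊆ (G14 n m pos neg).A := hDTOB.2.1.2.1
  have exists_nonwaiting (v : V14 n m) : ∃ L, IsWalk B.A (rt14 n m) v L ∧ waitW L = 0 := by
    obtain ⟨L, hLB, hL⟩ := hDTOB.exists_realizes (by rcases hd with rfl | rfl <;> simp)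
      (hV.ge (Finset.mem_univ v))
    exact ⟨L, hLB, ((realizes_G14_root_iff hd).1 hL).2⟩
  have exists_varArc_mem (i : Fin n) : ∃ b, varArc m i b ∈ B.A := by
    obtain ⟨L, hL, -⟩ := exists_nonwaiting (Sum.inl i)
    rcases isWalk_G14_root (hL.mono hBG) with ⟨hv, -⟩ | ⟨i', b, hv, rfl⟩ | ⟨i', j, b, b', hv, -⟩
    · simp [rt14] at hv
    · exact ⟨b, Sum.inl.inj hv ▸ hL.mem List.mem_cons_self⟩
    · simp at hv
  choose σ hσ using exists_varArc_mem
  refine satisfiable_iff_exists_litVars.2 ⟨σ, fun j => ?_⟩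
  obtain ⟨L, hL, hwait⟩ := exists_nonwaiting (Sum.inr (Sum.inl j))
  obtain ⟨i, b, hi, rfl⟩ := exists_eq_of_isWalk_G14_of_waitW_eq_zero (hL.mono hBG) hwait
  have hb : varArc m i b = varArc m i (σ i) :=
    hDTOB.1.injOn_head (hL.mem List.mem_cons_self) (hσ i) rfl
  exact ⟨i, (varArc_inj.1 hb).2 ▸ hi⟩

/-- The arcs of the reduction graph encoding the literals that the assignment `σ` makes true. -/
noncomputable def assignArcs (pos neg : Fin m → Finset (Fin n)) (σ : Fin n → Bool) :
    Finset (TArc (V14 n m)) :=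
  (G14 n m pos neg).A.filter fun a => ∃ i, a = varArc m i (σ i) ∨ ∃ j, a = clauseArc i j (σ i)

theorem assignArcs_subset {σ : Fin n → Bool} : assignArcs pos neg σ ⊆ (G14 n m pos neg).A :=
  Finset.filter_subset _ _

theorem varArc_mem_assignArcs {σ : Fin n → Bool} {i : Fin n} {b : Bool} :
    varArc m i b ∈ assignArcs pos neg σ ↔ b = σ i := by
  simp [assignArcs, varArc_mem_G14_A, varArc_inj, varArc_ne_clauseArc]

theorem clauseArc_mem_assignArcs {σ : Fin n → Bool} {i : Fin n} {j : Fin m} {b : Bool} :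
    clauseArc i j b ∈ assignArcs pos neg σ ↔ i ∈ litVars pos neg b j ∧ b = σ i := by
  simp [assignArcs, clauseArc_mem_G14_A, clauseArc_inj, (varArc_ne_clauseArc _ _ _ _ _).symm]

theorem reachAll_assignArcs {σ : Fin n → Bool} (hσ : ∀ j, ∃ i, i ∈ litVars pos neg (σ i) j) :
    ReachAll (assignArcs pos neg σ) Finset.univ (rt14 n m) := by
  rintro (i | j | ⟨⟩) -
  · exact ⟨_, isWalk_varArc (varArc_mem_assignArcs.2 rfl)⟩
  · obtain ⟨i, hi⟩ := hσ j
    exact ⟨_, isWalk_varArc_clauseArc (varArc_mem_assignArcs.2 rfl)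
      (clauseArc_mem_assignArcs.2 ⟨hi, rfl⟩)⟩
  · exact ⟨[], rfl⟩

theorem waitW_eq_zero_of_isWalk_assignArcs {σ : Fin n → Bool} {v : V14 n m}
    {L : List (TArc (V14 n m))} (h : IsWalk (assignArcs pos neg σ) (rt14 n m) v L) :
    waitW L = 0 := by
  rcases isWalk_G14_root (h.mono assignArcs_subset) with
    ⟨-, rfl⟩ | ⟨i, b, -, rfl⟩ | ⟨i, j, b, b', -, -, -, rfl⟩
  · rfl
  · exact waitW_varArc i b
  · have hb : b = σ i := varArc_mem_assignArcs.1 (h.mem (by simp))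
    have hb' : b' = σ i := (clauseArc_mem_assignArcs (j := j).1 (h.mem (by simp))).2
    rw [waitW_varArc_clauseArc, hb, hb', Nat.sub_self]

theorem exists_isSpanningDTOB_of_satisfiable {d : DistKind}
    (hd : d = DistKind.FT ∨ d = DistKind.MW) (h : Satisfiable n m pos neg) :
    ∃ B, IsSpanningDTOB d (G14 n m pos neg) B (rt14 n m) := by
  obtain ⟨σ, hσ⟩ := satisfiable_iff_exists_litVars.1 h
  refine exists_isSpanningDTOB (by rcases hd with rfl | rfl <;> simp) (Finset.mem_univ _)
    assignArcs_subset (reachAll_assignArcs hσ) fun v L hL => (realizes_G14_root_iff hd).2 ?_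
  exact ⟨hL.mono assignArcs_subset, waitW_eq_zero_of_isWalk_assignArcs hL⟩

end Reduction

/-- Theorem `thm:FT_tob_hard`, elapsed time 1, `τ = 4`: for
`d ∈ {FT, MW}`, the reduction graph has a spanning `d`-TOB with root `r` iff the CNF formula
is satisfiable. -/
theorem stmt_14 (n m : ℕ) (pos neg : Fin m → Finset (Fin n))
    (hne : ∀ j, (pos j ∪ neg j).Nonempty)
    (d : DistKind) (hd : d = DistKind.FT ∨ d = DistKind.MW) :
    (∃ B : TempGraph (V14 n m), IsSpanningDTOB d (G14 n m pos neg) B (rt14 n m)) ↔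
      Satisfiable n m pos neg := by
  exact ⟨fun ⟨_, hB⟩ => satisfiable_of_isSpanningDTOB hd hB,
    exists_isSpanningDTOB_of_satisfiable hd⟩
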